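/- PCE exist in every finite strategic-form game: every finite strategic-form game (with no strictly dominated strategies) has at least one player-compatible equilibrium. -/

import Mathlib

open scoped Classical

noncomputable section

variable {ι : Type} [Fintype ι] [DecidableEq ι] {S : ι → Type} [∀ i, Fintype (S i)]

/-- A full-support correlated strategy profile on `S = ∏ i, S i`. -/
def FullSupport (σ : (∀ i, S i) → ℝ) : Prop :=
  (∀ s, 0 < σ s) ∧ ∑ s, σ s = 1

/-- Expected payoff to player `i` from playing `si` against the correlated profile `σ`. -/
def expPay (U : ι → (∀ j, S j) → ℝ) (i : ι) (si : S i) (σ : (∀ j, S j) → ℝ) : ℝ :=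
  ∑ s, σ s * U i (Function.update s i si)

/-- `σ` and `τ` have the same marginal on the strategies of players other than `i` and `j`. -/
def SameMarginal (i j : ι) (σ τ : (∀ k, S k) → ℝ) : Prop :=
  ∀ s : ∀ k, S k,
    (∑ si : S i, ∑ sj : S j, σ (Function.update (Function.update s i si) j sj)) =
    (∑ si : S i, ∑ sj : S j, τ (Function.update (Function.update s i si) j sj))

/-- Player `i` is more compatible with `si` than player `j` is with `sj`. -/
def MoreCompatible (U : ι → (∀ j, S j) → ℝ) (i j : ι) (si : S i) (sj : S j) : Prop :=
  ∀ σ : (∀ k, S k) → ℝ, FullSupport σ →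
    (∀ sj' : S j, expPay U j sj' σ ≤ expPay U j sj σ) →
    ∀ τ : (∀ k, S k) → ℝ, FullSupport τ → SameMarginal i j σ τ →
      ∀ si' : S i, si' ≠ si → expPay U i si' τ < expPay U i si τ

/-- Expected payoff to `i` under an independent mixed strategy profile `μ`. -/
def profPay (U : ι → (∀ j, S j) → ℝ) (i : ι) (μ : ∀ j, S j → ℝ) : ℝ :=
  ∑ s : ∀ j, S j, (∏ j, μ j (s j)) * U i s

/-- `μi` is an `ε`-strategy for player `i`: a mixed strategy putting at least `ε i si`
on each pure strategy `si`. -/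
def InTrembleSet (ε : ∀ i, S i → ℝ) (i : ι) (μi : S i → ℝ) : Prop :=
  (∑ si, μi si = 1) ∧ ∀ si, ε i si ≤ μi si

/-- `μ` is an `ε`-equilibrium: each player's strategy maximizes her payoff over `ε`-strategies. -/
def IsEpsEquilibrium (U : ι → (∀ j, S j) → ℝ) (ε : ∀ i, S i → ℝ) (μ : ∀ i, S i → ℝ) : Prop :=
  (∀ i, InTrembleSet ε i (μ i)) ∧
  ∀ (i : ι) (τi : S i → ℝ), InTrembleSet ε i τi →
    profPay U i (Function.update μ i τi) ≤ profPay U i μ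

/-- A player-compatible tremble profile: positive trembles whose magnitudes respect
the compatibility relation. -/
def PlayerCompatibleTremble (U : ι → (∀ j, S j) → ℝ) (ε : ∀ i, S i → ℝ) : Prop :=
  (∀ i si, 0 < ε i si) ∧
  ∀ (i j : ι) (si : S i) (sj : S j), i ≠ j → MoreCompatible U i j si sj → ε j sj ≤ ε i si

/-- `σstar` is a player-compatible equilibrium: a limit of `ε⁽ᵗ⁾`-equilibria along
player-compatible tremble profiles `ε⁽ᵗ⁾ → 0`. -/
def IsPCE (U : ι → (∀ j, S j) → ℝ) (σstar : ∀ i, S i → ℝ) : Prop :=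
  ∃ (ε : ℕ → ∀ i, S i → ℝ) (σ : ℕ → ∀ i, S i → ℝ),
    (∀ t, PlayerCompatibleTremble U (ε t)) ∧
    (∀ i si, Filter.Tendsto (fun t => ε t i si) Filter.atTop (nhds 0)) ∧
    (∀ t, IsEpsEquilibrium U (ε t) (σ t)) ∧
    (∀ i si, Filter.Tendsto (fun t => σ t i si) Filter.atTop (nhds (σstar i si)))

/-- `si` is strictly dominated: some mixed strategy does strictly better against every
pure profile of the opponents. -/
def StrictlyDominated (U : ι → (∀ j, S j) → ℝ) (i : ι) (si : S i) : Prop :=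
  ∃ μ : S i → ℝ, ((∀ t, 0 ≤ μ t) ∧ ∑ t, μ t = 1) ∧
    ∀ s : ∀ k, S k,
      U i (Function.update s i si) < ∑ t, μ t * U i (Function.update s i t)

section PCEBrouwer

open MeasureTheory Set Metric

variable {E : Type*} [NormedAddCommGroup E] [InnerProductSpace ℝ E] [FiniteDimensional ℝ E]

/-- `t ↦ det (1 + t A)` is a polynomial in `t` of degree at most the dimension. -/
lemma pceb_det_poly (A : E →L[ℝ] E) :
    ∃ P : Polynomial ℝ, P.natDegree ≤ Module.finrank ℝ E ∧
      ∀ t : ℝ, P.eval t = (ContinuousLinearMap.id ℝ E + t • A).det := by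
  let b := Module.finBasis ℝ E
  let M := LinearMap.toMatrix b b (A : E →ₗ[ℝ] E)
  refine ⟨((Polynomial.X : Polynomial ℝ) • M.map Polynomial.C +
    (1 : Matrix _ _ ℝ).map Polynomial.C).det, ?_, ?_⟩
  · simpa using Polynomial.natDegree_det_X_add_C_le M 1
  · intro t
    rw [ContinuousLinearMap.det, ← LinearMap.det_toMatrix b, ← Polynomial.coe_evalRingHom,
      RingHom.map_det]
    congr 1
    ext i j
    simp [M, Matrix.one_apply, apply_ite (Polynomial.eval t)]
    ring

lemma pceb_det_pos (A : E →L[ℝ] E) (h : ‖A‖ < 1) :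
    0 < (ContinuousLinearMap.id ℝ E + A).det := by
  have hne : ∀ s ∈ Icc (0 : ℝ) 1, (ContinuousLinearMap.id ℝ E + s • A).det ≠ 0 := by
    intro s hs h0
    have := LinearMap.bot_lt_ker_of_det_eq_zero
      (f := ((ContinuousLinearMap.id ℝ E + s • A : E →L[ℝ] E) : E →ₗ[ℝ] E)) h0
    obtain ⟨v, hv, hv0⟩ := Submodule.exists_mem_ne_zero_of_ne_bot this.ne'
    have hv' : v + s • A v = 0 := by simpa using hv
    have h1 : ‖v‖ = s * ‖A v‖ := by
      have h := congrArg norm (eq_neg_of_add_eq_zero_left hv')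
      rwa [norm_neg, norm_smul, Real.norm_of_nonneg hs.1] at h
    have h2 := A.le_opNorm v
    have h3 : 0 < ‖v‖ := norm_pos_iff.2 hv0
    have h4 : 0 ≤ ‖A v‖ := norm_nonneg _
    nlinarith [hs.1, hs.2]
  obtain ⟨P, -, hP⟩ := pceb_det_poly A
  by_contra hcon
  push Not at hcon
  have h0 : P.eval 0 = 1 := by rw [hP]; simp [ContinuousLinearMap.det]
  have h1 : P.eval 1 ≤ 0 := by rw [hP]; simpa using hcon
  have := intermediate_value_Icc' (zero_le_one (α := ℝ)) P.continuous.continuousOn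
  obtain ⟨s, hs, hs0⟩ := this ⟨h1, by rw [h0]; exact zero_le_one⟩
  exact hne s hs (by rw [← hP]; exact hs0)

variable [MeasurableSpace E] [BorelSpace E]

/-- No `C¹` retraction of the ball onto the sphere. -/
lemma pceb_no_retraction (R : ℝ) (hR : 0 < R) (r : E → E)
    (hr : ∀ x ∈ closedBall (0 : E) R, ContDiffAt ℝ 1 r x)
    (hn : ∀ x ∈ closedBall (0 : E) R, ‖r x‖ = R)
    (hid : ∀ x, ‖x‖ = R → r x = x) : False := by
  let B := closedBall (0 : E) R
  let V := ball (0 : E) R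
  have hVB : V ⊆ B := ball_subset_closedBall
  have hBc : IsCompact B := isCompact_closedBall _ _
  let g : E → E := fun x => r x - x
  let A : E → (E →L[ℝ] E) := fun x => fderiv ℝ g x
  have hg : ∀ x ∈ B, ContDiffAt ℝ 1 g x := fun x hx => (hr x hx).sub contDiffAt_id
  have hgd : ∀ x ∈ B, HasFDerivAt g (A x) x := fun x hx =>
    ((hg x hx).differentiableAt (by simp)).hasFDerivAt
  have hAc : ContinuousOn A B := fun x hx =>
    ((hg x hx).continuousAt_fderiv (by simp)).continuousWithinAt
  obtain ⟨C, hC⟩ := (hBc.image_of_continuousOn hAc).isBounded.exists_norm_le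
  have hC' : ∀ x ∈ B, ‖A x‖ ≤ C := fun x hx => hC _ ⟨x, hx, rfl⟩
  have hC0 : 0 ≤ C := (norm_nonneg _).trans (hC' 0 (by simp [B, hR.le]))
  let c : NNReal := ⟨C, hC0⟩
  have hlip : LipschitzOnWith c g B :=
    (convex_closedBall (0:E) R).lipschitzOnWith_of_nnnorm_hasFDerivWithin_le
      (fun x hx => (hgd x hx).hasFDerivWithinAt) (fun x hx => hC' x hx)
  -- nodes
  let t₀ : ℝ := 1 / (C + 2)
  have key : ∀ t : ℝ, 0 ≤ t → t ≤ t₀ →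
      ∫ x in V, (ContinuousLinearMap.id ℝ E + t • A x).det = (volume : Measure E).real V := by
    intro t ht0 ht1
    have htC : t * C < 1 := by
      have : t * (C + 2) ≤ 1 := by
        rw [le_div_iff₀ (by positivity)] at ht1; exact ht1
      by_cases h : t = 0
      · simp [h]
      · have : 0 < t := lt_of_le_of_ne ht0 (Ne.symm h)
        nlinarith
    have htl : t < 1 := by
      have : t₀ < 1 := by
        rw [div_lt_one (by positivity)]; linarith
      linarith
    let f : E → E := fun x => x + t • g x
    have hf' : ∀ x ∈ B, HasFDerivAt f (ContinuousLinearMap.id ℝ E + t • A x) x := fun x hx =>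
      (hasFDerivAt_id x).add ((hgd x hx).const_smul t)
    have hlip' : ∀ x ∈ B, ∀ y ∈ B, ‖t • g x - t • g y‖ ≤ (t * C) * ‖x - y‖ := by
      intro x hx y hy
      rw [← smul_sub, norm_smul, Real.norm_of_nonneg ht0, mul_assoc]
      exact mul_le_mul_of_nonneg_left (hlip.norm_sub_le hx hy) ht0
    have hinj : InjOn f B := by
      intro x hx y hy hxy
      have h1 : x - y = -(t • g x - t • g y) := by
        have : x + t • g x = y + t • g y := hxy
        rw [neg_sub, sub_eq_sub_iff_add_eq_add, this, add_comm]
      have h2 := hlip' x hx y hy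
      rw [← norm_neg, ← h1] at h2
      by_contra hne
      have : 0 < ‖x - y‖ := norm_pos_iff.2 (sub_ne_zero.2 hne)
      nlinarith
    let k : NNReal := ⟨t * C, by positivity⟩
    have happ : ApproximatesLinearOn f
        ((ContinuousLinearEquiv.refl ℝ E : E ≃L[ℝ] E) : E →L[ℝ] E) V k := by
      intro x hx y hy
      have := hlip' x (hVB hx) y (hVB hy)
      change _ ≤ (t * C) * ‖x - y‖
      refine le_of_eq_of_le (congrArg norm ?_) this
      simp [f]
      abel
    have hopen : IsOpen (f '' V) := by
      refine happ.open_image (ContinuousLinearEquiv.toNonlinearRightInverse _) isOpen_ball ?_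
      rcases subsingleton_or_nontrivial E with h | h
      · left; exact h
      · right
        have : (ContinuousLinearEquiv.toNonlinearRightInverse
          (ContinuousLinearEquiv.refl ℝ E : E ≃L[ℝ] E)).nnnorm = 1 := by
          simp [ContinuousLinearEquiv.toNonlinearRightInverse]
        rw [this, inv_one]
        exact htC
    have hmaps : f '' V ⊆ V := by
      rintro _ ⟨x, hx, rfl⟩
      have hx' : ‖x‖ < R := by simpa [V] using hx
      have : f x = (1 - t) • x + t • r x := by
        simp only [f, g, smul_sub, sub_smul, one_smul]; abel
      have h2 : ‖f x‖ ≤ (1 - t) * ‖x‖ + t * R := by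
        rw [this]
        refine (norm_add_le _ _).trans ?_
        rw [norm_smul, norm_smul, hn x (hVB hx), Real.norm_of_nonneg ht0,
          Real.norm_of_nonneg (by linarith)]
      have : ‖f x‖ < R := by nlinarith
      simpa [V] using this
    have himg : f '' V = V := by
      refine hmaps.antisymm ?_
      refine (convex_ball (0:E) R).isPreconnected.subset_of_closure_inter_subset hopen ?_ ?_
      · have h0 : (0 : E) ∈ V := by simp [V, hR]
        exact ⟨f 0, hmaps ⟨0, h0, rfl⟩, 0, h0, rfl⟩
      · rintro y ⟨hy, hyV⟩
        have hcl : IsClosed (f '' B) :=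
          (hBc.image_of_continuousOn fun x hx =>
            (hf' x hx).continuousAt.continuousWithinAt).isClosed
        obtain ⟨x, hx, rfl⟩ := closure_minimal (image_mono hVB) hcl hy
        have hx' : ‖x‖ ≤ R := by simpa [B] using hx
        rcases hx'.lt_or_eq with h | h
        · exact ⟨x, by simpa [V] using h, rfl⟩
        · exfalso
          have : f x = x := by simp [f, g, hid x h]
          have hyV' : ‖f x‖ < R := by simpa using hyV
          rw [this] at hyV'
          linarith
    have hcv := integral_image_eq_integral_abs_det_fderiv_smul (volume : Measure E)
      (measurableSet_ball (x := (0:E)) (ε := R))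
      (fun x hx => (hf' x (hVB hx)).hasFDerivWithinAt) (hinj.mono hVB) (fun _ => (1 : ℝ))
    have himg' : f '' ball 0 R = ball 0 R := himg
    rw [himg'] at hcv
    simp only [integral_const, smul_eq_mul, mul_one, measureReal_restrict_apply_univ] at hcv
    rw [hcv]
    refine setIntegral_congr_fun measurableSet_ball fun x hx => ?_
    refine (abs_of_pos (pceb_det_pos _ ?_)).symm
    rw [norm_smul, Real.norm_of_nonneg ht0]
    exact (mul_le_mul_of_nonneg_left (hC' x (hVB hx)) ht0).trans_lt htC
  -- determinant vanishes at `t = 1`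
  have hzero : ∀ x ∈ V, (ContinuousLinearMap.id ℝ E + (1:ℝ) • A x).det = 0 := by
    intro x hx
    have hrd : HasFDerivAt r (ContinuousLinearMap.id ℝ E + (1:ℝ) • A x) x := by
      have := (hasFDerivAt_id x).add (hgd x (hVB hx))
      rw [one_smul]
      convert this using 1
      ext y; simp [g]
    set L := ContinuousLinearMap.id ℝ E + (1:ℝ) • A x
    have hin : ∀ v, inner ℝ (r x) (L v) = 0 := by
      intro v
      have h1 := hrd.norm_sq
      have h2 : HasFDerivAt (fun y => ‖r y‖ ^ 2) (0 : E →L[ℝ] ℝ) x := by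
        refine (hasFDerivAt_const (R ^ 2) x).congr_of_eventuallyEq ?_
        filter_upwards [isOpen_ball.mem_nhds hx] with y hy
        rw [hn y (hVB hy)]
      have := congrArg (fun l : E →L[ℝ] ℝ => l v) (h1.unique h2)
      simpa using this
    by_contra hdet
    have hu : IsUnit (LinearMap.det (L : E →ₗ[ℝ] E)) := isUnit_iff_ne_zero.2 hdet
    obtain ⟨v, hv⟩ := (LinearMap.equivOfIsUnitDet hu).surjective (r x)
    have hv' : L v = r x := by simpa using hv
    have h3 := hin v
    rw [hv', real_inner_self_eq_norm_sq, hn x (hVB hx)] at h3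
    exact (pow_pos hR 2).ne' h3
  -- interpolation
  let n := Module.finrank ℝ E
  let s := Finset.range (n + 1)
  let node : ℕ → ℝ := fun k => t₀ * (k / (n + 1))
  have ht₀ : 0 < t₀ := by positivity
  have hnode : Set.InjOn node s := by
    intro a _ b _ hab
    have h1 : (a : ℝ) / (n + 1) = b / (n + 1) := mul_left_cancel₀ ht₀.ne' hab
    have h2 : (n : ℝ) + 1 ≠ 0 := by positivity
    have h3 : (a : ℝ) = b := by field_simp at h1; exact h1
    exact_mod_cast h3
  have hinterp : ∀ x, (ContinuousLinearMap.id ℝ E + (1:ℝ) • A x).det =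
      ∑ k ∈ s, (ContinuousLinearMap.id ℝ E + node k • A x).det *
        (Lagrange.basis s node k).eval 1 := by
    intro x
    obtain ⟨P, hd, hP⟩ := pceb_det_poly (A x)
    have hdeg : P.degree < (s.card : WithBot ℕ) := by
      refine Polynomial.degree_le_natDegree.trans_lt ?_
      simp only [s, Finset.card_range]
      exact_mod_cast Nat.lt_succ_of_le hd
    have := congrArg (Polynomial.eval 1) (Lagrange.eq_interpolate hnode hdeg)
    rw [hP, Lagrange.interpolate_apply, Polynomial.eval_finsetSum] at this
    rw [this]
    refine Finset.sum_congr rfl fun k _ => ?_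
    rw [Polynomial.eval_mul, Polynomial.eval_C, hP]
  have h_integrable : ∀ t : ℝ, IntegrableOn (fun x => (ContinuousLinearMap.id ℝ E + t • A x).det) V := by
    intro t
    refine IntegrableOn.mono_set (ContinuousOn.integrableOn_compact hBc ?_) hVB
    exact ContinuousLinearMap.continuous_det.comp_continuousOn
      (continuousOn_const.add (hAc.const_smul t))
  have h1 : ∫ x in V, (ContinuousLinearMap.id ℝ E + (1:ℝ) • A x).det = 0 := by
    rw [setIntegral_congr_fun measurableSet_ball (g := fun _ => (0:ℝ)) fun x hx => hzero x hx]
    simp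
  have h2 : ∫ x in V, (ContinuousLinearMap.id ℝ E + (1:ℝ) • A x).det =
      (volume : Measure E).real V := by
    simp_rw [hinterp]
    rw [integral_finsetSum _ fun k _ => (h_integrable _).mul_const _]
    have : ∀ k ∈ s, ∫ x in V, (ContinuousLinearMap.id ℝ E + node k • A x).det *
        (Lagrange.basis s node k).eval 1 =
        (volume : Measure E).real V * (Lagrange.basis s node k).eval 1 := by
      intro k hk
      rw [integral_mul_const, key]
      · positivity
      · have : (k : ℝ) / (n + 1) ≤ 1 := by
          rw [div_le_one (by positivity)]
          have := Finset.mem_range.1 hk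
          exact_mod_cast this.le
        exact mul_le_of_le_one_right ht₀.le this
    rw [Finset.sum_congr rfl this, ← Finset.mul_sum, ← Polynomial.eval_finsetSum,
      Lagrange.sum_basis hnode ⟨0, by simp [s]⟩]
    simp
  have hpos : 0 < (volume : Measure E).real V :=
    ENNReal.toReal_pos (measure_ball_pos _ _ hR).ne' measure_ball_lt_top.ne
  linarith


/-- Brouwer for `C¹` maps on a ball. -/
lemma pceb_brouwer_smooth (R : ℝ) (hR : 0 < R) (f : E → E) (hf : ContDiff ℝ 1 f)
    (hfB : ∀ x ∈ closedBall (0 : E) R, ‖f x‖ ≤ R) :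
    ∃ x ∈ closedBall (0 : E) R, f x = x := by
  by_contra hcon
  push Not at hcon
  let u : E → E := fun x => x - f x
  let p : E → ℝ := fun x => inner ℝ x (u x)
  let q : E → ℝ := fun x => ‖u x‖ ^ 2
  let D : E → ℝ := fun x => p x ^ 2 + q x * (R ^ 2 - ‖x‖ ^ 2)
  let l : E → ℝ := fun x => (-p x + Real.sqrt (D x)) / q x
  have hu : ContDiff ℝ 1 u := contDiff_id.sub hf
  have hp : ContDiff ℝ 1 p := contDiff_id.inner ℝ hu
  have hq : ContDiff ℝ 1 q := hu.norm_sq ℝ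
  have hD : ContDiff ℝ 1 D := (hp.pow 2).add (hq.mul (contDiff_const.sub (contDiff_id.norm_sq ℝ)))
  have hq0 : ∀ x ∈ closedBall (0 : E) R, 0 < q x := by
    intro x hx
    have : u x ≠ 0 := sub_ne_zero.2 (hcon x hx).symm
    positivity
  have hps : ∀ x, ‖x‖ = R → 0 < p x := by
    intro x hx
    have hxB : x ∈ closedBall (0 : E) R := by simp [hx]
    have h1 : q x = ‖x‖ ^ 2 - 2 * inner ℝ x (f x) + ‖f x‖ ^ 2 := norm_sub_sq_real x (f x)
    have h2 : p x = ‖x‖ ^ 2 - inner ℝ x (f x) := by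
      simp only [p, u, inner_sub_right, real_inner_self_eq_norm_sq]
    have h3 := hq0 x hxB
    have h4 := hfB x hxB
    have h5 := norm_nonneg (f x)
    rw [hx] at h1 h2
    nlinarith
  have hD0 : ∀ x ∈ closedBall (0 : E) R, 0 < D x := by
    intro x hx
    have hx' : ‖x‖ ≤ R := by simpa using hx
    rcases hx'.lt_or_eq with h | h
    · have h1 := hq0 x hx
      have h2 : 0 < R ^ 2 - ‖x‖ ^ 2 := by nlinarith [norm_nonneg x]
      have := mul_pos h1 h2
      have := sq_nonneg (p x)
      simp only [D]; linarith
    · have := hps x h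
      simp only [D, h]; nlinarith
  refine pceb_no_retraction R hR (fun x => x + l x • u x) ?_ ?_ ?_
  · intro x hx
    refine contDiffAt_id.add (ContDiffAt.smul ?_ hu.contDiffAt)
    exact (hp.contDiffAt.neg.add (hD.contDiffAt.sqrt (hD0 x hx).ne')).div hq.contDiffAt
      (hq0 x hx).ne'
  · intro x hx
    have h1 : ‖x + l x • u x‖ ^ 2 = R ^ 2 := by
      rw [norm_add_sq_real, norm_smul, mul_pow, inner_smul_right, Real.norm_eq_abs, sq_abs]
      change ‖x‖ ^ 2 + 2 * (l x * p x) + l x ^ 2 * q x = R ^ 2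
      have h2 : l x * q x = -p x + Real.sqrt (D x) := div_mul_cancel₀ _ (hq0 x hx).ne'
      have h3 : Real.sqrt (D x) ^ 2 = p x ^ 2 + q x * (R ^ 2 - ‖x‖ ^ 2) :=
        Real.sq_sqrt (hD0 x hx).le
      have h4 : (l x * q x + p x) ^ 2 = p x ^ 2 + q x * (R ^ 2 - ‖x‖ ^ 2) := by
        rw [← h3, h2]; ring
      refine mul_left_cancel₀ (hq0 x hx).ne' ?_
      linear_combination h4
    exact (pow_left_inj₀ (norm_nonneg _) hR.le two_ne_zero).1 h1
  · intro x hx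
    have : l x = 0 := by
      have h1 : D x = p x ^ 2 := by simp [D, hx]
      simp only [l, h1, Real.sqrt_sq (hps x hx).le]
      simp
    simp [this]

/-- Brouwer for continuous bounded maps. -/
lemma pceb_brouwer (R : ℝ) (hR : 0 < R) (f : E → E) (hf : Continuous f)
    (hfB : ∀ x, ‖f x‖ ≤ R) : ∃ x, f x = x := by
  by_contra hcon
  push Not at hcon
  have hK : IsCompact (closedBall (0 : E) (R + 1)) := isCompact_closedBall _ _
  obtain ⟨x₀, -, hx₀⟩ := hK.exists_isMinOn ⟨0, by simp; linarith⟩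
    (f := fun x => ‖f x - x‖) (hf.sub continuous_id).norm.continuousOn
  have hpos : 0 < ‖f x₀ - x₀‖ := norm_pos_iff.2 (sub_ne_zero.2 (hcon x₀))
  obtain ⟨g, hg, hgf, -⟩ := hf.exists_contDiff_approx 1
    (ε := fun _ => min 1 ‖f x₀ - x₀‖) continuous_const (fun _ => lt_min one_pos hpos)
  obtain ⟨x, hx, hgx⟩ := pceb_brouwer_smooth (R + 1) (by linarith) g hg (fun x _ => by
    have h1 := (hgf x).le.trans (min_le_left _ _)
    rw [dist_eq_norm] at h1
    have h2 := norm_add_le (g x - f x) (f x)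
    rw [sub_add_cancel] at h2
    linarith [hfB x])
  have h1 : ‖f x₀ - x₀‖ ≤ ‖f x - x‖ := hx₀ hx
  have h2 := (hgf x).trans_le (min_le_right _ _)
  rw [hgx, dist_comm, dist_eq_norm] at h2
  linarith

/-- Hartman–Stampacchia. -/
lemma pceb_variational (K : Set E) (hKc : IsCompact K) (hKv : Convex ℝ K) (hne : K.Nonempty)
    (v : E → E) (hv : Continuous v) :
    ∃ x ∈ K, ∀ y ∈ K, inner ℝ (v x) (y - x) ≤ 0 := by
  choose P hPK hP using exists_norm_eq_iInf_of_complete_convex hne hKc.isComplete hKv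
  have hP' : ∀ x, ∀ w ∈ K, inner ℝ (x - P x) (w - P x) ≤ 0 := fun x =>
    (norm_eq_iInf_iff_real_inner_le_zero hKv (hPK x)).1 (hP x)
  have hPc : Continuous P := by
    refine (LipschitzWith.of_dist_le_mul (K := 1) fun x y => ?_).continuous
    have h1 := hP' x (P y) (hPK y)
    have h2 := hP' y (P x) (hPK x)
    have h3 : ‖P x - P y‖ ^ 2 ≤ inner ℝ (x - y) (P x - P y) := by
      rw [← real_inner_self_eq_norm_sq]
      simp only [inner_sub_left, inner_sub_right] at *
      simp only [real_inner_comm] at *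
      linarith
    have h4 := real_inner_le_norm (x - y) (P x - P y)
    simp only [NNReal.coe_one, one_mul, dist_eq_norm]
    by_contra hlt
    push Not at hlt
    nlinarith [norm_nonneg (x - y), norm_nonneg (P x - P y)]
  obtain ⟨C, hC⟩ := hKc.isBounded.exists_norm_le
  obtain ⟨x, hx⟩ := pceb_brouwer (|C| + 1) (by positivity) (fun z => P (P z + v (P z)))
    (hPc.comp (hPc.add (hv.comp hPc)))
    (fun z => (hC _ (hPK _)).trans (by linarith [le_abs_self C]))
  have hx' : P (P x + v (P x)) = x := hx
  have hxK : x ∈ K := hx' ▸ hPK _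
  have hPx : P x = x := by
    have h := hP' x x hxK
    rw [real_inner_self_eq_norm_sq] at h
    have : ‖x - P x‖ = 0 := by nlinarith [norm_nonneg (x - P x)]
    exact (sub_eq_zero.1 (norm_eq_zero.1 this)).symm
  rw [hPx] at hx'
  refine ⟨x, hxK, fun y hy => ?_⟩
  have := hP' (x + v x) y hy
  rwa [hx', add_sub_cancel_left] at this

end PCEBrouwer

section PCEGame

lemma pceg_linear (U : ι → (∀ j, S j) → ℝ) (i : ι) (μ : ∀ j, S j → ℝ) (τ : S i → ℝ) :
    profPay U i (Function.update μ i τ) =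
      ∑ a, τ a * profPay U i (Function.update μ i (Pi.single a 1)) := by
  have h : ∀ (τ : S i → ℝ) (s : ∀ j, S j), ∏ j, (Function.update μ i τ) j (s j) =
      τ (s i) * ∏ j ∈ Finset.univ.erase i, μ j (s j) := by
    intro τ s
    rw [← Finset.mul_prod_erase _ _ (Finset.mem_univ i), Function.update_self]
    congr 1
    refine Finset.prod_congr rfl fun j hj => ?_
    rw [Function.update_of_ne (Finset.ne_of_mem_erase hj)]
  simp only [profPay, h, Finset.mul_sum]
  rw [Finset.sum_comm]
  refine Finset.sum_congr rfl fun s _ => ?_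
  rw [Finset.sum_eq_single (s i)]
  · simp [mul_assoc]
  · intro b _ hb
    simp [Ne.symm hb]
  · simp

lemma pceg_continuous (U : ι → (∀ j, S j) → ℝ) (i : ι) : Continuous (profPay U i) := by
  unfold profPay
  fun_prop

lemma pceg_exists (U : ι → (∀ j, S j) → ℝ) (e : ℝ) (he : 0 < e)
    (hcard : ∀ i, 0 < Fintype.card (S i)) (hS : ∀ i, (Fintype.card (S i) : ℝ) * e ≤ 1) :
    ∃ μ : ∀ i, S i → ℝ, IsEpsEquilibrium U (fun _ _ => e) μ := by
  let m : EuclideanSpace ℝ (Σ i, S i) → ∀ i, S i → ℝ := fun x i s => x ⟨i, s⟩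
  let w : (∀ i, S i → ℝ) → EuclideanSpace ℝ (Σ i, S i) := fun μ => WithLp.toLp 2 fun k => μ k.1 k.2
  have hmw : ∀ μ, m (w μ) = μ := fun μ => rfl
  have hm : Continuous m := by
    refine continuous_pi fun i => continuous_pi fun s => ?_
    simp only [m]
    fun_prop
  have hw : Continuous w := by
    refine (PiLp.continuous_toLp 2 _).comp ?_
    fun_prop
  let K₀ : Set (∀ i, S i → ℝ) := {μ | ∀ i, InTrembleSet (fun _ _ => e) i (μ i)}
  have hle : ∀ μ ∈ K₀, ∀ i s, μ i s ≤ 1 := by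
    intro μ hμ i s
    rw [← (hμ i).1]
    exact Finset.single_le_sum (f := μ i) (fun a _ => he.le.trans ((hμ i).2 a)) (Finset.mem_univ s)
  have hclosed : IsClosed K₀ := by
    have : K₀ = ⋂ i, {μ | ∑ s, μ i s = 1} ∩ ⋂ s, {μ | e ≤ μ i s} := by
      ext μ
      simp [K₀, InTrembleSet]
    rw [this]
    refine isClosed_iInter fun i => IsClosed.inter ?_ (isClosed_iInter fun s => ?_)
    · exact isClosed_eq (by fun_prop) continuous_const
    · exact isClosed_le continuous_const (by fun_prop)
  have hcomp : IsCompact K₀ := by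
    refine IsCompact.of_isClosed_subset
      (isCompact_univ_pi fun i => isCompact_univ_pi fun _ => isCompact_Icc (a := (0:ℝ)) (b := 1))
      hclosed ?_
    intro μ hμ i _ s _
    exact ⟨he.le.trans ((hμ i).2 s), hle μ hμ i s⟩
  let K : Set (EuclideanSpace ℝ (Σ i, S i)) := w '' K₀
  have hKc : IsCompact K := hcomp.image hw
  have hKv : Convex ℝ K := by
    rintro _ ⟨μ, hμ, rfl⟩ _ ⟨ν, hν, rfl⟩ a b ha hb hab
    refine ⟨fun i s => a * μ i s + b * ν i s, fun i => ⟨?_, fun s => ?_⟩, ?_⟩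
    · rw [Finset.sum_add_distrib, ← Finset.mul_sum, ← Finset.mul_sum, (hμ i).1, (hν i).1]
      linarith
    · have h1 := mul_le_mul_of_nonneg_left ((hμ i).2 s) ha
      have h2 := mul_le_mul_of_nonneg_left ((hν i).2 s) hb
      have h3 : e = a * e + b * e := by rw [← add_mul, hab, one_mul]
      simp only at h1 h2 ⊢
      linarith
    · ext k
      simp [w]
  have hKne : K.Nonempty := by
    refine ⟨_, fun i _ => (Fintype.card (S i) : ℝ)⁻¹, fun i => ⟨?_, fun s => ?_⟩, rfl⟩
    · have : (Fintype.card (S i) : ℝ) ≠ 0 := by exact_mod_cast (hcard i).ne'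
      simp [this]
    · have : (0:ℝ) < Fintype.card (S i) := by exact_mod_cast hcard i
      change e ≤ (Fintype.card (S i) : ℝ)⁻¹
      rw [← one_div, le_div_iff₀ this, mul_comm]
      exact hS i
  let v : EuclideanSpace ℝ (Σ i, S i) → EuclideanSpace ℝ (Σ i, S i) := fun x =>
    w fun i s => profPay U i (Function.update (m x) i (Pi.single s 1))
  have hv : Continuous v := by
    have h : Continuous fun x => fun i (s : S i) =>
        profPay U i (Function.update (m x) i (Pi.single s 1)) :=
      continuous_pi fun i => continuous_pi fun s =>
        (pceg_continuous U i).comp (hm.update i continuous_const)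
    exact hw.comp h
  obtain ⟨_, ⟨μ, hμ, rfl⟩, hmax⟩ := pceb_variational K hKc hKv hKne v hv
  refine ⟨μ, hμ, fun i τ hτ => ?_⟩
  have hτ' : Function.update μ i τ ∈ K₀ := by
    intro j
    by_cases h : j = i
    · subst h; rw [Function.update_self]; exact hτ
    · rw [Function.update_of_ne h]; exact hμ j
  have h1 := hmax _ ⟨_, hτ', rfl⟩
  have h2 : inner ℝ (v (w μ)) (w (Function.update μ i τ) - w μ) =
      profPay U i (Function.update μ i τ) - profPay U i μ := by
    have h3 := pceg_linear U i μ τ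
    have h4 := pceg_linear U i μ (μ i)
    rw [Function.update_eq_self] at h4
    rw [h3, h4, ← Finset.sum_sub_distrib, PiLp.inner_apply, Fintype.sum_sigma,
      Finset.sum_eq_single i]
    · refine Finset.sum_congr rfl fun s _ => ?_
      simp [v, w, m]
      ring
    · intro j _ hj
      refine Finset.sum_eq_zero fun s _ => ?_
      simp [w, Function.update_of_ne hj]
    · simp
  linarith

end PCEGame

/-- PCE exists in every finite strategic-form game (with no strictly dominated strategies). -/
theorem pce_exists
    (U : ι → (∀ j, S j) → ℝ)
    (hcard : ∀ i, 2 ≤ Fintype.card (S i))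
    (hnodom : ∀ (i : ι) (si : S i), ¬ StrictlyDominated U i si) :
    ∃ σstar : ∀ i, S i → ℝ, IsPCE U σstar := by
  have _ := hnodom
  let N : ℝ := ∑ i, (Fintype.card (S i) : ℝ)
  have hN : 0 ≤ N := Finset.sum_nonneg fun _ _ => Nat.cast_nonneg _
  let e : ℕ → ℝ := fun t => 1 / ((t : ℝ) + 1 + N)
  have he : ∀ t, 0 < e t := fun t => by positivity
  have he0 : Filter.Tendsto e Filter.atTop (nhds 0) := by
    refine squeeze_zero (fun t => (he t).le) (fun t => ?_)
      (tendsto_one_div_add_atTop_nhds_zero_nat (𝕜 := ℝ))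
    exact one_div_le_one_div_of_le (by positivity) (by linarith)
  have hex : ∀ t, ∃ μ : ∀ i, S i → ℝ, IsEpsEquilibrium U (fun _ _ => e t) μ := by
    intro t
    refine pceg_exists U (e t) (he t) (fun i => by have := hcard i; omega) fun i => ?_
    have h1 : (Fintype.card (S i) : ℝ) ≤ N :=
      Finset.single_le_sum (f := fun i => (Fintype.card (S i) : ℝ))
        (fun _ _ => Nat.cast_nonneg _) (Finset.mem_univ i)
    rw [mul_one_div, div_le_one (by positivity)]
    have : (0:ℝ) ≤ t := Nat.cast_nonneg _
    linarith
  choose σ hσ using hex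
  have hcomp : IsCompact (Set.univ.pi fun i : ι => Set.univ.pi fun _ : S i =>
      Set.Icc (0:ℝ) 1) := isCompact_univ_pi fun i => isCompact_univ_pi fun _ => isCompact_Icc
  have hmem : ∀ t, σ t ∈ (Set.univ.pi fun i : ι => Set.univ.pi fun _ : S i =>
      Set.Icc (0:ℝ) 1) := by
    intro t i _ s _
    have h := (hσ t).1 i
    refine ⟨(he t).le.trans (h.2 s), ?_⟩
    rw [← h.1]
    exact Finset.single_le_sum (f := σ t i) (fun a _ => (he t).le.trans (h.2 a))
      (Finset.mem_univ s)
  obtain ⟨σs, -, φ, hφ, hlim⟩ := hcomp.tendsto_subseq hmem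
  refine ⟨σs, fun t _ _ => e (φ t), fun t => σ (φ t), fun t => ⟨fun _ _ => he _, ?_⟩, ?_,
    fun t => hσ _, ?_⟩
  · intro i j si sj _ _
    exact le_rfl
  · intro i si
    exact he0.comp hφ.tendsto_atTop
  · intro i si
    exact tendsto_pi_nhds.1 (tendsto_pi_nhds.1 hlim i) si

end
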